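/- Let m ≥ 1, n ≥ 1 be integers and k ∈ ℤ with k ≥ −n. Then the two rational functions w_{m,n}(z; k) = T_{m−1,n}^{(k)}(z) T_{m−1,n+1}^{(k)}(z)/(T_{m,n}^{(k)}(z) T_{m−2,n+1}^{(k)}(z)) and ŵ_{m,n+k}(z; −k) = T̂_{m−1,n+k}^{(−k)}(z) T̂_{m−1,n+k+1}^{(−k)}(z)/(T̂_{m,n+k}^{(−k)}(z) T̂_{m−2,n+k+1}^{(−k)}(z)), where T̂_{a,b}^{(ν)}(z) = T_{a,b}^{(ν)}(−z), are both solutions of P_V with the same parameters α = m²/2, β = −(m+2n+k+1)²/2, γ = k. -/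

import Mathlib

noncomputable section

open Finset

/-- Generalized binomial coefficient `C(x, k)` for real `x`. -/
def genBinom (x : ℝ) (k : ℕ) : ℝ :=
  (∏ i ∈ Finset.range k, (x - i)) / (Nat.factorial k)

/-- Associated Laguerre polynomial `L_n^{(α)}(z)`, with the convention `L_n^{(α)} = 0` for `n < 0`. -/
def lagL (n : ℤ) (α : ℝ) : ℝ → ℝ := fun z =>
  if n < 0 then 0
  else ∑ k ∈ Finset.range (n.toNat + 1),
    (-1 : ℝ) ^ k * genBinom ((n : ℝ) + α) (n.toNat - k) * z ^ k / (Nat.factorial k)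

/-- Generalised Laguerre polynomial
`T_{m,n}^{(μ)}(z) = det[(d/dz)^{j+k} L_{m+n}^{(μ+1)}(z)]_{j,k=0}^{n-1}`
(with `T_{m,0}^{(μ)} = 1`, the empty determinant). -/
def genLag (m : ℤ) (n : ℕ) (μ : ℝ) : ℝ → ℝ := fun z =>
  Matrix.det (Matrix.of fun j k : Fin n =>
    iteratedDeriv ((j : ℕ) + (k : ℕ)) (lagL (m + n) (μ + 1)) z)

/-- Wronskian `Wr(f_1, …, f_r)(z) = det[(d/dz)^{j-1} f_k(z)]`. -/
def wronskian {r : ℕ} (f : Fin r → ℝ → ℝ) : ℝ → ℝ := fun z =>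
  Matrix.det (Matrix.of fun j k : Fin r => iteratedDeriv (j : ℕ) (f k) z)

/-- The constant `c_{m,n} = (-1)^{n(2m+1+n)/2} ∏_{j=1}^n (j-1)!/(m+j)!`. -/
def cmn (m n : ℕ) : ℝ :=
  (-1 : ℝ) ^ (n * (2 * m + 1 + n) / 2) *
    ∏ j ∈ Finset.range n, (Nat.factorial j : ℝ) / (Nat.factorial (m + j + 1))

/-- `τ_{m,n}^{(μ)}(z) = det[(z d/dz)^{j+k} L_{m+n}^{(n+μ)}(z)]_{j,k=0}^{n-1}`. -/
def tauP (m : ℤ) (n : ℕ) (μ : ℝ) : ℝ → ℝ := fun z =>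
  Matrix.det (Matrix.of fun j k : Fin n =>
    ((fun (g : ℝ → ℝ) => fun t => t * deriv g t)^[(j : ℕ) + (k : ℕ)]
      (lagL (m + n) ((n : ℝ) + μ))) z)

/-- Hirota bilinear operator `D_z(f • g) = f' g - f g'`. -/
def hirota (f g : ℝ → ℝ) (z : ℝ) : ℝ := deriv f z * g z - f z * deriv g z

/-- Probabilists' Hermite polynomial `He_n` as a real function. -/
def He (n : ℕ) : ℝ → ℝ := fun z => Polynomial.aeval z (Polynomial.hermite n)

/-- The fifth Painlevé equation (with `δ = -1/2`) for `w` with parameters `(a, b, c)`,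
holding at the point `z`. -/
def PV (a b c : ℝ) (w : ℝ → ℝ) (z : ℝ) : Prop :=
  iteratedDeriv 2 w z =
    (1 / (2 * w z) + 1 / (w z - 1)) * (deriv w z) ^ 2
      - (1 / z) * deriv w z
      + (w z - 1) ^ 2 * (a * (w z) ^ 2 + b) / (z ^ 2 * w z)
      + c * w z / z
      - w z * (w z + 1) / (2 * (w z - 1))

/-- The Jimbo–Miwa–Okamoto `σ`-equation `S_V` with parameters `(ν₁, ν₂, ν₃)`,
holding at the point `z`. -/
def SV (ν₁ ν₂ ν₃ : ℝ) (σ : ℝ → ℝ) (z : ℝ) : Prop :=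
  (z * iteratedDeriv 2 σ z) ^ 2 =
    (2 * (deriv σ z) ^ 2 + (ν₁ + ν₂ + ν₃ - z) * deriv σ z + σ z) ^ 2
      - 4 * deriv σ z * (deriv σ z + ν₁) * (deriv σ z + ν₂) * (deriv σ z + ν₃)


/-- first half of the step: the next second logarithmic derivative of the `A` sequence -/
lemma alg_b (z w p m n a l0 l1 X Y w' p' X' : ℝ) (hz : z ≠ 0) (hw : w ≠ 0) (hw1 : w - 1 ≠ 0)
    (hX : X = p - (p + (m + 2 * n + a)) / w + m)
    (hY : Y = z + p / w - (p - m * w + (m + 2 * n + a)))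
    (hw' : z * w' = w * (X - Y))
    (hp' : z * p' = (w - 1) * p * (p + (m + 2 * n + a)) / w - z * w * (p + n) / (w - 1))
    (hX'1 : z * X' = X + l1 - l0)
    (hX'2 : X' = p' - (p' * w - (p + (m + 2 * n + a)) * w') / w ^ 2)
    (hl0 : -l0 = p * (p + a + 2 * n - 1) - z * w * (p + n) / (w - 1)) (s : ℝ)
    (hs : s = (p + (m + 2 * n + a)) / w - m) :
    -l1 = s * (s - (a + 2 * n + 1)) - z * (s - (a + n)) / (w - 1) := by
  have hp : p = (s + m) * w - (m + 2 * n + a) := by rw [hs]; field_simp; ring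
  have h1 : l1 = z * p' - (z * p' * w - (p + (m + 2 * n + a)) * (z * w')) / w ^ 2 - X + l0 := by
    have : l1 = z * X' - X + l0 := by rw [hX'1]; ring
    rw [this, hX'2]; ring
  have h0 : l0 = -(p * (p + a + 2 * n - 1) - z * w * (p + n) / (w - 1)) := by rw [← hl0]; ring
  rw [h1, h0, hw', hp', hX, hY, hp]
  field_simp
  ring

lemma alg_d (z w p m n a l0 l1 X Y w' p' Y' : ℝ) (hz : z ≠ 0) (hw : w ≠ 0) (hw1 : w - 1 ≠ 0)
    (hX : X = p - (p + (m + 2 * n + a)) / w + m)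
    (hY : Y = z + p / w - (p - m * w + (m + 2 * n + a)))
    (hw' : z * w' = w * (X - Y))
    (hp' : z * p' = (w - 1) * p * (p + (m + 2 * n + a)) / w - z * w * (p + n) / (w - 1))
    (hY'1 : z * Y' = Y + l1 - l0)
    (hY'2 : Y' = 1 + (p' * w - p * w') / w ^ 2 - (p' - m * w'))
    (hl0 : -l0 = (p / w) * (p / w + a + 2 * n - 1) - z * (p / w + n) / (w - 1)) (s : ℝ)
    (hs : s = (p + (m + 2 * n + a)) / w - m) :
    -l1 = s * w * (s * w - (a + 2 * n + 1)) - z * w * (s * w - (a + n)) / (w - 1) := by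
  have hp : p = (s + m) * w - (m + 2 * n + a) := by rw [hs]; field_simp; ring
  have h1 : l1 = z + (z * p' * w - p * (z * w')) / w ^ 2 - (z * p' - m * (z * w')) - Y + l0 := by
    have : l1 = z * Y' - Y + l0 := by rw [hY'1]; ring
    rw [this, hY'2]; ring
  have h0 : l0 = -((p / w) * (p / w + a + 2 * n - 1) - z * (p / w + n) / (w - 1)) := by
    rw [← hl0]; ring
  rw [h1, h0, hw', hp', hX, hY, hp]
  field_simp
  ring

lemma alg_s (z w p m n a X Y w' p' s s' : ℝ) (hz : z ≠ 0) (hw : w ≠ 0) (hw1 : w - 1 ≠ 0)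
    (hX : X = p - (p + (m + 2 * n + a)) / w + m)
    (hY : Y = z + p / w - (p - m * w + (m + 2 * n + a)))
    (hw' : z * w' = w * (X - Y))
    (hp' : z * p' = (w - 1) * p * (p + (m + 2 * n + a)) / w - z * w * (p + n) / (w - 1))
    (hs : s = (p + (m + 2 * n + a)) / w - m)
    (hs' : s' = (p' * w - (p + (m + 2 * n + a)) * w') / w ^ 2) :
    z * s' = -(w - 1) * s * (s + m) - z * (s - (a + n)) / (w - 1) ∧
    z * w' = (w - 1) * ((2 * s + m) * w - (m + 2 * n + a)) - z * w ∧
    X = (s + m) * w - (m + 2 * n + a) - s ∧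
    Y = z + s + m - (m + 2 * n + a) / w - s * w := by
  have hp : p = (s + m) * w - (m + 2 * n + a) := by rw [hs]; field_simp; ring
  have h1 : z * s' = (z * p' * w - (p + (m + 2 * n + a)) * (z * w')) / w ^ 2 := by
    rw [hs']; ring
  refine ⟨?_, ?_, ?_, ?_⟩
  · rw [h1, hw', hp', hX, hY, hp]; field_simp; ring
  · rw [hw', hX, hY, hp]; field_simp; ring
  · rw [hX, hp]; field_simp; ring
  · rw [hY, hp]; field_simp; ring

/-- second half of the step, all in terms of `s` and `w` -/
lemma alg_step (z w m n a s X Y w' s' b d b' d' X1 Y1 w1 p1 : ℝ) (hz : z ≠ 0) (hw : w ≠ 0)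
    (hw1 : w - 1 ≠ 0) (hb0 : b ≠ 0) (hd0 : d ≠ 0) (hw11 : w1 - 1 ≠ 0)
    (hX : X = (s + m) * w - (m + 2 * n + a) - s)
    (hY : Y = z + s + m - (m + 2 * n + a) / w - s * w)
    (hw' : z * w' = (w - 1) * ((2 * s + m) * w - (m + 2 * n + a)) - z * w)
    (hs' : z * s' = -(w - 1) * s * (s + m) - z * (s - (a + n)) / (w - 1))
    (hb : b = s * (s - (a + 2 * n + 1)) - z * (s - (a + n)) / (w - 1))
    (hd : d = s * w * (s * w - (a + 2 * n + 1)) - z * w * (s * w - (a + n)) / (w - 1))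
    (hb' : b' = s' * (s - (a + 2 * n + 1)) + s * s' -
      (((s - (a + n)) + z * s') * (w - 1) - z * (s - (a + n)) * w') / (w - 1) ^ 2)
    (hd' : d' = (s' * w + s * w') * (s * w - (a + 2 * n + 1)) + s * w * (s' * w + s * w') -
      (((w + z * w') * (s * w - (a + n)) + z * w * (s' * w + s * w')) * (w - 1)
        - z * w * (s * w - (a + n)) * w') / (w - 1) ^ 2)
    (hbX : z * b' = b * (2 + X1 - X)) (hdY : z * d' = d * (2 + Y1 - Y))
    (hww : w1 = w * b / d)
    (hp1 : p1 = (w1 * (X1 - (m - 1)) + (m + 2 * n + a + 1)) / (w1 - 1)) :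
    s ≠ 0 ∧ p1 = b / s ∧
    Y1 = z + p1 / w1 - (p1 - (m - 1) * w1 + (m + 2 * n + a + 1)) ∧
    b = p1 * (p1 + a + 2 * n + 1) - z * w1 * (p1 + n + 1) / (w1 - 1) ∧
    d = (p1 / w1) * (p1 / w1 + a + 2 * n + 1) - z * (p1 / w1 + n + 1) / (w1 - 1) ∧
    z * ((b' * s - b * s') / s ^ 2) = (w1 - 1) * p1 * (p1 + (m + 2 * n + a + 1)) / w1
      - z * w1 * (p1 + n + 1) / (w1 - 1) := by
  have hfac : w * b - d = s * w * (z - s * (w - 1)) := by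
    rw [hb, hd]; field_simp; ring
  have hw11' : w1 - 1 = s * w * (z - s * (w - 1)) / d := by
    rw [← hfac, hww]; field_simp
  have hs0 : s ≠ 0 := by
    rintro rfl; apply hw11; rw [hw11']; simp
  have hu0 : z - s * (w - 1) ≠ 0 := by
    intro h; apply hw11; rw [hw11', h]; simp
  have hw10 : w1 ≠ 0 := by rw [hww]; positivity
  have ezb : z * b' = b * (2 - X + z - s * (w - 1) + m - 1) - (m + 2 * n + a + 1) * d / w := by
    have : z * b' = z * s' * (s - (a + 2 * n + 1)) + s * (z * s') -
      ((z * (s - (a + n)) + z * (z * s')) * (w - 1) - z * (s - (a + n)) * (z * w')) / (w - 1) ^ 2 := by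
      rw [hb']; ring
    rw [this, hs', hw', hb, hd, hX]
    field_simp
    ring
  have ezd : z * d' = d * (2 - Y + s * (w - 1) - (m + 2 * n + a + 1)) + (m - 1) * w * b := by
    have : z * d' = (z * s' * w + s * (z * w')) * (s * w - (a + 2 * n + 1)) + s * w * (z * s' * w + s * (z * w')) -
      (((z * w + z * (z * w')) * (s * w - (a + n)) + z * w * (z * s' * w + s * (z * w'))) * (w - 1)
        - z * w * (s * w - (a + n)) * (z * w')) / (w - 1) ^ 2 := by
      rw [hd']; ring
    rw [this, hs', hw', hb, hd, hY]
    field_simp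
    ring
  have eX1 : X1 = z - s * (w - 1) + m - 1 - (m + 2 * n + a + 1) / w1 := by
    have h : b * X1 = b * (z - s * (w - 1) + m - 1) - (m + 2 * n + a + 1) * d / w := by
      linear_combination ezb - hbX
    have h2 : X1 = (b * (z - s * (w - 1) + m - 1) - (m + 2 * n + a + 1) * d / w) / b := by
      rw [← h]; field_simp
    rw [h2, hww]; field_simp
  have eY1 : Y1 = s * (w - 1) - (m + 2 * n + a + 1) + (m - 1) * w1 := by
    have h : d * Y1 = d * (s * (w - 1) - (m + 2 * n + a + 1)) + (m - 1) * w * b := by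
      linear_combination ezd - hdY
    have h2 : Y1 = (d * (s * (w - 1) - (m + 2 * n + a + 1)) + (m - 1) * w * b) / d := by
      rw [← h]; field_simp
    rw [h2, hww]; field_simp
  have hp1' : p1 = w1 * (z - s * (w - 1)) / (w1 - 1) := by
    rw [hp1, eX1]; congr 1; field_simp; ring
  have hp1s : p1 = b / s := by
    rw [hp1', hw11', hww]; field_simp
  have hq : w1 / (w1 - 1) = p1 / (z - s * (w - 1)) := by
    rw [hp1']; field_simp
  have hq2 : 1 / (w1 - 1) = (p1 - z + s * (w - 1)) / (z - s * (w - 1)) := by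
    have : 1 / (w1 - 1) = w1 / (w1 - 1) - 1 := by field_simp; ring
    rw [this, hq]; field_simp; ring
  have hr : p1 / w1 = p1 - (z - s * (w - 1)) := by
    rw [hp1']; field_simp; ring
  -- relation for p1
  have hps : p1 * s * (w - 1) = s * (s - (a + 2 * n + 1)) * (w - 1) - z * (s - (a + n)) := by
    rw [hp1s, hb]; field_simp
  have hbs : b = p1 * s := by rw [hp1s]; field_simp
  have key : z * (p1 + n + 1) / (z - s * (w - 1)) = p1 + (a + 2 * n + 1) - s := by
    rw [div_eq_iff hu0]; linear_combination hps
  have hds : d = (p1 / w1) * (s * w) := by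
    rw [hp1s, hww]; field_simp
  have hzw : z * w1 * (p1 + n + 1) / (w1 - 1) = p1 * (p1 + (a + 2 * n + 1) - s) := by
    rw [← key]
    calc z * w1 * (p1 + n + 1) / (w1 - 1) = z * (p1 + n + 1) * (w1 / (w1 - 1)) := by ring
      _ = _ := by rw [hq]; ring
  refine ⟨hs0, hp1s, ?_, ?_, ?_, ?_⟩
  · rw [hr, eY1]; ring
  · rw [hzw, hbs]; ring
  · have h3 : z * (p1 / w1 + n + 1) / (w1 - 1) = (p1/w1) * (p1/w1 + (a + 2 * n + 1) - s * w) := by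
      have : (p1/w1) = (p1 - z + s * (w - 1)) := by rw [hr]; ring
      rw [this]
      calc z * (p1 - z + s * (w - 1) + n + 1) / (w1 - 1) = z * (p1 - z + s * (w - 1) + n + 1) * (1 / (w1 - 1)) := by ring
        _ = _ := by
          rw [hq2, mul_div_assoc', div_eq_iff hu0]
          linear_combination (p1 - z + s * (w - 1)) * hps
    rw [h3]; linear_combination hds
  · rw [hzw]
    have h4 : (w1 - 1) * p1 * (p1 + (m + 2 * n + a + 1)) / w1 = (z - s * (w - 1)) * (p1 + (m + 2 * n + a + 1)) := by
      rw [hp1']; field_simp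
    rw [h4]
    have h5 : z * ((b' * s - b * s') / s ^ 2) = (z * b' - p1 * (z * s')) / s := by
      rw [hbs]; field_simp
    have hdw : d / w = s * (p1 - (z - s * (w - 1))) := by rw [hds, hr]; field_simp
    rw [h5, ezb, mul_div_assoc, hdw, hs', hX, div_eq_iff hs0, hbs]
    have h6 : z * (s - (a + n)) / (w - 1) = s * (s - (a + 2 * n + 1)) - p1 * s := by
      rw [div_eq_iff hw1]; linear_combination hps
    rw [h6]; ring

lemma alg_pv (z w p m n a w' w'' p' : ℝ) (hz : z ≠ 0) (hw : w ≠ 0) (hw1 : w - 1 ≠ 0)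
    (hw' : z * w' = (w - 1) * (2 * p - m * w + (m + 2 * n + a)) - z * w)
    (hp' : z * p' = (w - 1) * p * (p + (m + 2 * n + a)) / w - z * w * (p + n) / (w - 1))
    (hw'' : w' + z * w'' = w' * (2 * p - m * w + (m + 2 * n + a)) + (w - 1) * (2 * p' - m * w') - w - z * w') :
    w'' = (1 / (2 * w) + 1 / (w - 1)) * w' ^ 2 - (1 / z) * w'
      + (w - 1) ^ 2 * (m ^ 2 / 2 * w ^ 2 + -(m + 2 * n + (a - 1) + 1) ^ 2 / 2) / (z ^ 2 * w)
      + (a - 1) * w / z - w * (w + 1) / (2 * (w - 1)) := by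
  have e1 : w' = ((w - 1) * (2 * p - m * w + (m + 2 * n + a)) - z * w) / z := by
    rw [← hw']; field_simp
  have e2 : p' = ((w - 1) * p * (p + (m + 2 * n + a)) / w - z * w * (p + n) / (w - 1)) / z := by
    rw [← hp']; field_simp
  have e3 : w'' = (w' * (2 * p - m * w + (m + 2 * n + a)) + (w - 1) * (2 * p' - m * w') - w - z * w' - w') / z := by
    rw [eq_div_iff hz]; linear_combination hw''
  rw [e3, e2, e1]
  field_simp
  ring

open Polynomial

/-- Desnanot-Jacobi via the Schur complement -/
lemma dj_field {K : Type*} [Field K] {n : ℕ} (h : ℕ → ℕ → K)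
    (h0 : (Matrix.of fun i j : Fin n => h i j).det ≠ 0) :
    (Matrix.of fun i j : Fin n ⊕ Fin 2 => h (Sum.elim (fun x : Fin n => (x : ℕ)) (fun x : Fin 2 => n + (x : ℕ)) i)
        (Sum.elim (fun x : Fin n => (x : ℕ)) (fun x : Fin 2 => n + (x : ℕ)) j)).det *
      (Matrix.of fun i j : Fin n => h i j).det =
    (Matrix.of fun i j : Fin n ⊕ Unit => h (Sum.elim (fun x : Fin n => (x : ℕ)) (fun _ : Unit => n) i)
        (Sum.elim (fun x : Fin n => (x : ℕ)) (fun _ : Unit => n) j)).det *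
    (Matrix.of fun i j : Fin n ⊕ Unit => h (Sum.elim (fun x : Fin n => (x : ℕ)) (fun _ : Unit => n + 1) i)
        (Sum.elim (fun x : Fin n => (x : ℕ)) (fun _ : Unit => n + 1) j)).det -
    (Matrix.of fun i j : Fin n ⊕ Unit => h (Sum.elim (fun x : Fin n => (x : ℕ)) (fun _ : Unit => n) i)
        (Sum.elim (fun x : Fin n => (x : ℕ)) (fun _ : Unit => n + 1) j)).det *
    (Matrix.of fun i j : Fin n ⊕ Unit => h (Sum.elim (fun x : Fin n => (x : ℕ)) (fun _ : Unit => n + 1) i)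
        (Sum.elim (fun x : Fin n => (x : ℕ)) (fun _ : Unit => n) j)).det := by
  set A : Matrix (Fin n) (Fin n) K := Matrix.of fun i j : Fin n => h i j with hA
  let _ : Invertible A := Matrix.invertibleOfIsUnitDet A (isUnit_iff_ne_zero.mpr h0)
  set G : ℕ → ℕ → K := fun r c =>
    h r c - ∑ j : Fin n, (∑ i : Fin n, h r i * (⅟A) i j) * h j c with hG
  have hmin : ∀ r c : ℕ, (Matrix.of fun i j : Fin n ⊕ Unit =>
      h (Sum.elim (fun x : Fin n => (x : ℕ)) (fun _ : Unit => r) i)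
        (Sum.elim (fun x : Fin n => (x : ℕ)) (fun _ : Unit => c) j)).det = A.det * G r c := by
    intro r c
    have : (Matrix.of fun i j : Fin n ⊕ Unit =>
      h (Sum.elim (fun x : Fin n => (x : ℕ)) (fun _ : Unit => r) i)
        (Sum.elim (fun x : Fin n => (x : ℕ)) (fun _ : Unit => c) j)) =
        Matrix.fromBlocks A (Matrix.of fun i _ => h i c) (Matrix.of fun _ j => h r j)
          (Matrix.of fun _ _ => h r c) := by
      ext i j
      rcases i with i | i <;> rcases j with j | j <;> simp [hA]
    rw [this, Matrix.det_fromBlocks₁₁, Matrix.det_unique (n := Unit)]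
    congr 1
  rw [hmin, hmin, hmin, hmin]
  have : (Matrix.of fun i j : Fin n ⊕ Fin 2 => h (Sum.elim (fun x : Fin n => (x : ℕ)) (fun x : Fin 2 => n + (x : ℕ)) i)
        (Sum.elim (fun x : Fin n => (x : ℕ)) (fun x : Fin 2 => n + (x : ℕ)) j)) =
      Matrix.fromBlocks A (Matrix.of fun i (j : Fin 2) => h i (n + j))
        (Matrix.of fun (i : Fin 2) j => h (n + i) j)
        (Matrix.of fun (i j : Fin 2) => h (n + i) (n + j)) := by
    ext i j
    rcases i with i | i <;> rcases j with j | j <;> simp [hA]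
  rw [this, Matrix.det_fromBlocks₁₁, Matrix.det_fin_two]
  simp [hG, Matrix.mul_apply, Matrix.sub_apply]
  ring

/-- Hankel determinant -/
noncomputable def tau (f : ℝ[X]) (n : ℕ) : ℝ[X] :=
  (Matrix.of fun j k : Fin n => derivative^[(j : ℕ) + (k : ℕ)] f).det

noncomputable def tauB (f : ℝ[X]) (n r c : ℕ) : ℝ[X] :=
  (Matrix.of fun i j : Fin n ⊕ Unit =>
    derivative^[(Sum.elim (fun x : Fin n => (x : ℕ)) (fun _ : Unit => r) i) +
        (Sum.elim (fun x : Fin n => (x : ℕ)) (fun _ : Unit => c) j)] f).det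

lemma tauB_symm (f : ℝ[X]) (n r c : ℕ) : tauB f n r c = tauB f n c r := by
  unfold tauB
  rw [← Matrix.det_transpose]
  congr 1
  ext i j
  simp [Matrix.transpose_apply, add_comm]

lemma tau_succ (f : ℝ[X]) (n : ℕ) : tau f (n + 1) = tauB f n n n := by
  unfold tau tauB
  rw [← Matrix.det_submatrix_equiv_self
    ((Equiv.sumCongr (Equiv.refl (Fin n)) (Equiv.ofUnique Unit (Fin 1))).trans
      (finSumFinEquiv : Fin n ⊕ Fin 1 ≃ Fin (n + 1)))]
  congr 1
  ext i j
  rcases i with i | i <;> rcases j with j | j <;> simp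

lemma tau_succ2 (f : ℝ[X]) (n : ℕ) : tau f (n + 2) = (Matrix.of fun i j : Fin n ⊕ Fin 2 =>
    derivative^[(Sum.elim (fun x : Fin n => (x : ℕ)) (fun x : Fin 2 => n + (x : ℕ)) i) +
        (Sum.elim (fun x : Fin n => (x : ℕ)) (fun x : Fin 2 => n + (x : ℕ)) j)] f).det := by
  unfold tau
  rw [← Matrix.det_submatrix_equiv_self (finSumFinEquiv : Fin n ⊕ Fin 2 ≃ Fin (n + 2))]
  congr 1
  ext i j
  rcases i with i | i <;> rcases j with j | j <;> simp

lemma derivative_det {ι : Type*} [Fintype ι] [DecidableEq ι] (M : Matrix ι ι ℝ[X]) :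
    derivative M.det = ∑ i, (M.updateRow i (fun j => derivative (M i j))).det := by
  rw [← Matrix.det_transpose, Matrix.det_apply, map_sum]
  have : ∀ i, (M.updateRow i (fun j => derivative (M i j))).det =
      ∑ σ : Equiv.Perm ι, Equiv.Perm.sign σ •
        ((∏ k ∈ Finset.univ.erase i, M k (σ k)) * derivative (M i (σ i))) := by
    intro i
    rw [← Matrix.det_transpose, Matrix.det_apply]
    refine Finset.sum_congr rfl fun σ _ => ?_
    congr 1
    rw [← Finset.mul_prod_erase _ _ (Finset.mem_univ i), mul_comm]
    congr 1
    · refine Finset.prod_congr rfl fun k hk => ?_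
      simp [Matrix.updateRow_ne (Finset.ne_of_mem_erase hk)]
    · simp
  simp_rw [this]
  rw [Finset.sum_comm]
  refine Finset.sum_congr rfl fun σ _ => ?_
  rw [← Finset.smul_sum]
  have h2 : derivative (Equiv.Perm.sign σ • ∏ i, M.transpose (σ i) i) =
      Equiv.Perm.sign σ • derivative (∏ i, M.transpose (σ i) i) := by
    rcases Int.units_eq_one_or (Equiv.Perm.sign σ) with h | h <;> simp [h]
  rw [h2, derivative_prod_finset]
  simp [Matrix.transpose_apply]

lemma derivative_tauB (f : ℝ[X]) (n c : ℕ) :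
    derivative (tauB f n n c) = tauB f n (n + 1) c := by
  unfold tauB
  rw [derivative_det, Fintype.sum_sum_type, Finset.sum_eq_zero, zero_add]
  · simp only [Finset.univ_unique, Finset.sum_singleton]
    congr 1
    ext i j
    rcases i with i | i
    · rw [Matrix.updateRow_ne (by simp)]; simp
    · simp only [Matrix.of_apply, PUnit.default_eq_unit, Matrix.updateRow_self, Sum.elim_inr]
      rw [← Function.iterate_succ_apply' (f := derivative)]
      congr 2; omega
  · intro k _
    by_cases hk : (k : ℕ) + 1 < n
    · apply Matrix.det_zero_of_row_eq (i := Sum.inl k) (j := Sum.inl ⟨k + 1, hk⟩)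
      · simp [Fin.ext_iff]
      · rw [Matrix.updateRow_self, Matrix.updateRow_ne (by simp [Fin.ext_iff])]
        ext1 j
        simp only [Matrix.of_apply, Sum.elim_inl]
        rw [← Function.iterate_succ_apply' (f := derivative)]
        congr 2; omega
    · apply Matrix.det_zero_of_row_eq (i := Sum.inl k) (j := Sum.inr ())
      · simp
      · rw [Matrix.updateRow_self, Matrix.updateRow_ne (by simp)]
        ext1 j
        simp only [Matrix.of_apply, Sum.elim_inl, Sum.elim_inr]
        rw [← Function.iterate_succ_apply' (f := derivative)]
        congr 2; omega

lemma toda (f : ℝ[X]) (n : ℕ) (h0 : tau f n ≠ 0) :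
    tau f (n + 2) * tau f n = tau f (n + 1) * derivative (derivative (tau f (n + 1)))
      - derivative (tau f (n + 1)) ^ 2 := by
  have e1 : derivative (tau f (n + 1)) = tauB f n (n + 1) n := by
    rw [tau_succ, derivative_tauB]
  have e2 : derivative (derivative (tau f (n + 1))) = tauB f n (n + 1) (n + 1) := by
    rw [e1, tauB_symm, derivative_tauB]
  rw [e2, e1, tau_succ2, tau_succ]
  have inj := IsFractionRing.injective ℝ[X] (FractionRing ℝ[X])
  apply inj
  have := dj_field (n := n) (K := FractionRing ℝ[X])
    (fun i j => algebraMap ℝ[X] (FractionRing ℝ[X]) (derivative^[i + j] f)) (by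
      have : (Matrix.of fun i j : Fin n => algebraMap ℝ[X] (FractionRing ℝ[X])
        (derivative^[(i : ℕ) + (j : ℕ)] f)).det =
          algebraMap ℝ[X] (FractionRing ℝ[X]) (tau f n) := by
        rw [tau, RingHom.map_det]; rfl
      rw [this]
      intro h
      exact h0 (inj (by rw [h, map_zero])))
  have hs := tauB_symm f n n (n + 1)
  rw [sq, map_sub, map_mul, map_mul, map_mul]
  nth_rewrite 1 [← hs]
  unfold tau tauB
  simp only [RingHom.map_det]
  exact this

lemma deg_aux (q : ℝ[X]) (d : ℕ) (hd : q.natDegree = d + 1) :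
    (q * derivative (derivative q) - derivative q ^ 2).natDegree = 2 * d ∧
    q * derivative (derivative q) - derivative q ^ 2 ≠ 0 := by
  have hq : q.coeff (d + 1) ≠ 0 := by
    rw [← hd, coeff_natDegree, Ne, leadingCoeff_eq_zero]
    rintro rfl; simp at hd
  have d1 : (derivative q).natDegree ≤ d := (natDegree_derivative_le q).trans (by omega)
  have d2 : (derivative (derivative q)).natDegree ≤ d - 1 :=
    (natDegree_derivative_le _).trans (by omega)
  have hle : (q * derivative (derivative q) - derivative q ^ 2).natDegree ≤ 2 * d := by
    refine (natDegree_sub_le _ _).trans (max_le ?_ ?_)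
    · rcases Nat.eq_zero_or_pos d with rfl | h
      · have : derivative (derivative q) = 0 := by
          apply derivative_of_natDegree_zero; omega
        simp [this]
      · refine natDegree_mul_le.trans (by omega)
    · refine natDegree_pow_le.trans (by omega)
  have hc : (q * derivative (derivative q) - derivative q ^ 2).coeff (2 * d) =
      -((d : ℝ) + 1) * q.coeff (d + 1) ^ 2 := by
    rw [coeff_sub]
    have c2 : (derivative q ^ 2).coeff (2 * d) = ((derivative q).coeff d) ^ 2 := by
      exact coeff_pow_of_natDegree_le d1
    rw [c2]
    rcases Nat.eq_zero_or_pos d with rfl | h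
    · have : derivative (derivative q) = 0 := by
        apply derivative_of_natDegree_zero; omega
      simp [this, coeff_derivative]
    · obtain ⟨k, rfl⟩ : ∃ k, d = k + 1 := ⟨d - 1, by omega⟩
      have : (q * derivative (derivative q)).coeff (2 * (k + 1)) =
          q.coeff (k + 1 + 1) * (derivative (derivative q)).coeff k := by
        rw [show 2 * (k + 1) = (k + 1 + 1) + k by ring]
        exact coeff_mul_add_eq_of_natDegree_le hd.le d2
      rw [this]
      simp only [coeff_derivative]
      push_cast
      ring
  have hne : (q * derivative (derivative q) - derivative q ^ 2).coeff (2 * d) ≠ 0 := by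
    rw [hc]
    have : -((d : ℝ) + 1) ≠ 0 := by
      have : (0 : ℝ) ≤ d := Nat.cast_nonneg d
      intro h; linarith
    exact mul_ne_zero this (pow_ne_zero _ hq)
  exact ⟨natDegree_eq_of_le_of_coeff_ne_zero hle hne, fun h => hne (by rw [h]; simp)⟩

lemma tau_deg (f : ℝ[X]) (N : ℕ) (hf : f.natDegree = N) (hf0 : f ≠ 0) (n : ℕ) :
    (n ≤ N + 1 → tau f n ≠ 0 ∧ (tau f n).natDegree = n * (N + 1 - n)) ∧
    (n + 1 ≤ N + 1 → tau f (n + 1) ≠ 0 ∧ (tau f (n + 1)).natDegree = (n + 1) * (N - n)) := by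
  induction n with
  | zero =>
    refine ⟨fun _ => by simp [tau], fun _ => ?_⟩
    have : tau f 1 = f := by simp [tau]
    simp [this, hf, hf0]
  | succ n ih =>
    refine ⟨fun h => ?_, fun h => ?_⟩
    · have := ih.2 h
      refine ⟨this.1, this.2.trans ?_⟩
      congr 1; omega
    · obtain ⟨h1, h2⟩ := ih.1 (by omega)
      obtain ⟨h3, h4⟩ := ih.2 (by omega)
      obtain ⟨k, rfl⟩ : ∃ k, N = n + 1 + k := ⟨N - (n + 1), by omega⟩
      have e1 : n + 1 + k - n = k + 1 := by omega
      have e2 : n + 1 + k + 1 - n = k + 2 := by omega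
      have e3 : n + 1 + k - (n + 1) = k := by omega
      rw [e1] at h4; rw [e2] at h2; rw [e3]
      have := deg_aux (tau f (n + 1)) (n * (k + 1) + k) (by rw [h4]; ring)
      rw [← toda f n h1] at this
      obtain ⟨h5, h6⟩ := this
      have h7 : tau f (n + 2) ≠ 0 := left_ne_zero_of_mul h6
      refine ⟨h7, ?_⟩
      rw [natDegree_mul h7 h1, h2] at h5
      have : n + 1 + 1 = n + 2 := rfl
      rw [this]
      nlinarith

def lagP (N : ℕ) (a : ℝ) : ℝ[X] :=
  ∑ k ∈ Finset.range (N + 1),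
    monomial k ((-1 : ℝ) ^ k * genBinom ((N : ℝ) + a) (N - k) / (Nat.factorial k))

lemma lagP_coeff (N : ℕ) (a : ℝ) (k : ℕ) : (lagP N a).coeff k =
    if k ≤ N then (-1 : ℝ) ^ k * genBinom ((N : ℝ) + a) (N - k) / (Nat.factorial k) else 0 := by
  simp only [lagP, finsetSum_coeff, coeff_monomial]
  rw [Finset.sum_ite_eq']
  simp [Nat.lt_succ_iff]

lemma lagP_eval (N : ℕ) (a : ℝ) : lagL (N : ℤ) a = fun z => (lagP N a).eval z := by
  ext z
  simp only [lagL, lagP, eval_finsetSum, eval_monomial]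
  rw [if_neg (by omega)]
  simp only [Int.toNat_natCast, Int.cast_natCast]
  exact Finset.sum_congr rfl fun k _ => by ring

lemma lagP_natDegree (N : ℕ) (a : ℝ) : (lagP N a).natDegree = N := by
  apply natDegree_eq_of_le_of_coeff_ne_zero
  · rw [natDegree_le_iff_coeff_eq_zero]
    intro k hk
    rw [lagP_coeff, if_neg (by omega)]
  · rw [lagP_coeff, if_pos le_rfl]
    simp [genBinom, Nat.factorial_ne_zero]

lemma lagP_ne_zero (N : ℕ) (a : ℝ) : lagP N a ≠ 0 := by
  intro h
  have : (lagP N a).coeff N = 0 := by rw [h]; simp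
  rw [lagP_coeff, if_pos le_rfl] at this
  simp [genBinom, Nat.factorial_ne_zero] at this

lemma genBinom_zero (x : ℝ) : genBinom x 0 = 1 := by simp [genBinom]

lemma genBinom_absorb (x : ℝ) (k : ℕ) :
    ((k : ℝ) + 1) * genBinom (x + 1) (k + 1) = (x + 1) * genBinom x k := by
  unfold genBinom
  rw [Finset.prod_range_succ', Nat.factorial_succ]
  have : ∀ i : ℕ, x + 1 - ((i + 1 : ℕ) : ℝ) = x - i := by intro i; push_cast; ring
  simp only [this]
  have h1 : (Nat.factorial k : ℝ) ≠ 0 := by positivity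
  have h2 : (k : ℝ) + 1 ≠ 0 := by positivity
  push_cast
  field_simp
  ring

lemma genBinom_pascal (x : ℝ) (k : ℕ) :
    genBinom (x + 1) (k + 1) = genBinom x (k + 1) + genBinom x k := by
  have h2 : (k : ℝ) + 1 ≠ 0 := by positivity
  have h := genBinom_absorb x k
  have h3 : ((k : ℝ) + 1) * genBinom x (k + 1) = (x - k) * genBinom x k := by
    unfold genBinom
    rw [Finset.prod_range_succ, Nat.factorial_succ]
    have h1 : (Nat.factorial k : ℝ) ≠ 0 := by positivity
    push_cast
    field_simp
  apply mul_left_cancel₀ h2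
  linear_combination h - h3

lemma lagP_rel1 (N : ℕ) (a : ℝ) : X * derivative (lagP (N + 1) a) =
    C ((N : ℝ) + 1) * lagP (N + 1) a - C ((N : ℝ) + 1 + a) * lagP N a := by
  ext k
  rw [coeff_sub, coeff_C_mul, coeff_C_mul]
  have hL : (X * derivative (lagP (N + 1) a)).coeff k = k * (lagP (N + 1) a).coeff k := by
    cases k with
    | zero => simp
    | succ k => rw [coeff_X_mul, coeff_derivative]; push_cast; ring
  rw [hL, lagP_coeff, lagP_coeff]
  rcases lt_trichotomy k (N + 1) with h | h | h
  · rw [if_pos (by omega), if_pos (by omega)]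
    obtain ⟨j, rfl⟩ : ∃ j, N = k + j := ⟨N - k, by omega⟩
    have e1 : k + j + 1 - k = j + 1 := by omega
    have e2 : k + j - k = j := by omega
    rw [e1, e2]
    have := genBinom_absorb (((k + j : ℕ) : ℝ) + a) j
    rw [show ((k + j + 1 : ℕ) : ℝ) + a = ((k + j : ℕ) : ℝ) + a + 1 by push_cast; ring]
    push_cast at this ⊢
    linear_combination (-(-1) ^ k / (Nat.factorial k : ℝ)) * this
  · subst h
    simp
  · rw [if_neg (by omega), if_neg (by omega)]; simp

lemma lagP_rel2 (N : ℕ) (a : ℝ) : derivative (lagP (N + 1) a) =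
    derivative (lagP N a) - lagP N a := by
  ext k
  rw [coeff_sub, coeff_derivative, coeff_derivative, lagP_coeff, lagP_coeff, lagP_coeff]
  have h1 : (Nat.factorial k : ℝ) ≠ 0 := by positivity
  have h2 : (k : ℝ) + 1 ≠ 0 := by positivity
  rcases lt_trichotomy k N with h | h | h
  · rw [if_pos (by omega), if_pos (by omega), if_pos (by omega)]
    obtain ⟨j, rfl⟩ : ∃ j, N = k + 1 + j := ⟨N - (k + 1), by omega⟩
    have e1 : k + 1 + j + 1 - (k + 1) = j + 1 := by omega
    have e2 : k + 1 + j - (k + 1) = j := by omega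
    have e3 : k + 1 + j - k = j + 1 := by omega
    rw [e1, e2, e3]
    rw [show ((k + 1 + j + 1 : ℕ) : ℝ) + a = ((k + 1 + j : ℕ) : ℝ) + a + 1 by push_cast; ring,
      genBinom_pascal, Nat.factorial_succ]
    push_cast
    field_simp
    ring
  · subst h
    rw [if_pos (by omega), if_neg (by omega), if_pos (by omega), Nat.factorial_succ]
    simp only [Nat.sub_self, genBinom_zero]
    push_cast
    field_simp
    ring
  · rw [if_neg (by omega), if_neg (by omega), if_neg (by omega)]; simp

lemma iteratedDeriv_poly (q : ℝ[X]) (j : ℕ) :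
    iteratedDeriv j (fun z => q.eval z) = fun z => (derivative^[j] q).eval z := by
  induction j with
  | zero => simp
  | succ j ih =>
    rw [iteratedDeriv_succ, ih, Function.iterate_succ_apply']
    ext z
    exact Polynomial.deriv _

lemma genLag_eq (m : ℤ) (n N : ℕ) (μ : ℝ) (h : m + n = N) (z : ℝ) :
    genLag m n μ z = (tau (lagP N (μ + 1)) n).eval z := by
  unfold genLag tau
  rw [h, lagP_eval]
  simp only [iteratedDeriv_poly]
  rw [← coe_evalRingHom, RingHom.map_det]
  rfl


/-- `z` times the logarithmic derivative -/
noncomputable def ld (q : ℝ[X]) (z : ℝ) : ℝ := z * (derivative q).eval z / q.eval z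

/-- `z ^ 2` times the second logarithmic derivative -/
noncomputable def l2 (q : ℝ[X]) (z : ℝ) : ℝ :=
  z ^ 2 * (q.eval z * (derivative (derivative q)).eval z - (derivative q).eval z ^ 2) / q.eval z ^ 2

lemma ld_hasDerivAt (q : ℝ[X]) (z : ℝ) (hz : z ≠ 0) (hq : q.eval z ≠ 0) :
    HasDerivAt (ld q) ((ld q z + l2 q z) / z) z := by
  have h := ((hasDerivAt_id z).mul ((derivative q).hasDerivAt z)).div (q.hasDerivAt z) hq
  refine h.congr_deriv ?_
  simp only [ld, l2, id, Pi.mul_apply]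
  field_simp
  ring

noncomputable def wf (A B : ℕ → ℝ[X]) (n : ℕ) (z : ℝ) : ℝ :=
  (B n).eval z * (A (n + 1)).eval z / ((A n).eval z * (B (n + 1)).eval z)

noncomputable def xf (A : ℕ → ℝ[X]) (n : ℕ) (z : ℝ) : ℝ := ld (A (n + 1)) z - ld (A n) z

noncomputable def pf (N : ℕ) (a : ℝ) (A B : ℕ → ℝ[X]) (n : ℕ) (z : ℝ) : ℝ :=
  (wf A B n z * (xf A n z - ((N : ℝ) - n)) + ((N : ℝ) - n + 2 * n + a)) / (wf A B n z - 1)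

lemma wf_hasDerivAt (A B : ℕ → ℝ[X]) (n : ℕ) (z : ℝ) (hz : z ≠ 0) (h1 : (A n).eval z ≠ 0)
    (h2 : (A (n + 1)).eval z ≠ 0) (h3 : (B n).eval z ≠ 0) (h4 : (B (n + 1)).eval z ≠ 0) :
    HasDerivAt (wf A B n) (wf A B n z * (xf A n z - xf B n z) / z) z := by
  have h := (((B n).hasDerivAt z).mul ((A (n + 1)).hasDerivAt z)).div
    (((A n).hasDerivAt z).mul ((B (n + 1)).hasDerivAt z)) (mul_ne_zero h1 h4)
  refine h.congr_deriv ?_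
  simp only [wf, xf, ld, Pi.mul_apply]
  field_simp
  ring

lemma xf_hasDerivAt (A : ℕ → ℝ[X]) (n : ℕ) (z : ℝ) (hz : z ≠ 0) (h1 : (A n).eval z ≠ 0)
    (h2 : (A (n + 1)).eval z ≠ 0) :
    HasDerivAt (xf A n) ((xf A n z + l2 (A (n + 1)) z - l2 (A n) z) / z) z := by
  refine ((ld_hasDerivAt _ z hz h2).sub (ld_hasDerivAt _ z hz h1)).congr_deriv ?_
  simp only [xf]; ring

lemma l2_toda (A : ℕ → ℝ[X]) (n : ℕ) (z : ℝ)
    (ht : A (n + 2) * A n = A (n + 1) * derivative (derivative (A (n + 1)))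
      - derivative (A (n + 1)) ^ 2) :
    l2 (A (n + 1)) z = z ^ 2 * ((A (n + 2)).eval z * (A n).eval z) / (A (n + 1)).eval z ^ 2 := by
  have := congrArg (eval z) ht
  simp only [eval_mul, eval_sub, eval_pow] at this
  rw [l2, this]

lemma l2_hasDerivAt (A : ℕ → ℝ[X]) (n : ℕ) (z : ℝ) (hz : z ≠ 0) (h1 : (A n).eval z ≠ 0)
    (h2 : (A (n + 1)).eval z ≠ 0) (h3 : (A (n + 2)).eval z ≠ 0)
    (ht : A (n + 2) * A n = A (n + 1) * derivative (derivative (A (n + 1)))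
      - derivative (A (n + 1)) ^ 2) :
    HasDerivAt (l2 (A (n + 1)))
      (l2 (A (n + 1)) z * (2 + xf A (n + 1) z - xf A n z) / z) z := by
  have e : l2 (A (n + 1)) = fun z => z ^ 2 * ((A (n + 2)).eval z * (A n).eval z) /
      (A (n + 1)).eval z ^ 2 := funext fun z => l2_toda A n z ht
  rw [e]
  have h := ((hasDerivAt_pow 2 z).mul (((A (n + 2)).hasDerivAt z).mul ((A n).hasDerivAt z))).div
    (((A (n + 1)).hasDerivAt z).pow 2) (pow_ne_zero 2 h2)
  refine h.congr_deriv ?_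
  simp only [xf, ld, Pi.mul_apply, Pi.pow_apply]
  push_cast
  field_simp
  ring

/-- the inductive hypothesis at one point -/
def Hyp (N : ℕ) (a : ℝ) (A B : ℕ → ℝ[X]) (n : ℕ) (z : ℝ) : Prop :=
  (xf B n z = z + pf N a A B n z / wf A B n z -
      (pf N a A B n z - ((N : ℝ) - n) * wf A B n z + ((N : ℝ) - n + 2 * n + a))) ∧
  (-l2 (A n) z = pf N a A B n z * (pf N a A B n z + a + 2 * n - 1)
      - z * wf A B n z * (pf N a A B n z + n) / (wf A B n z - 1)) ∧
  (-l2 (B n) z = pf N a A B n z / wf A B n z * (pf N a A B n z / wf A B n z + a + 2 * n - 1)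
      - z * (pf N a A B n z / wf A B n z + n) / (wf A B n z - 1)) ∧
  ∃ p', HasDerivAt (pf N a A B n) p' z ∧
    z * p' = (wf A B n z - 1) * pf N a A B n z *
        (pf N a A B n z + ((N : ℝ) - n + 2 * n + a)) / wf A B n z
      - z * wf A B n z * (pf N a A B n z + n) / (wf A B n z - 1)

lemma xf_eq (N : ℕ) (a : ℝ) (A B : ℕ → ℝ[X]) (n : ℕ) (z : ℝ) (h0 : wf A B n z ≠ 0)
    (h1 : wf A B n z - 1 ≠ 0) :
    xf A n z = pf N a A B n z - (pf N a A B n z + ((N : ℝ) - n + 2 * n + a)) / wf A B n z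
      + ((N : ℝ) - n) := by
  unfold pf
  field_simp
  ring

/-- good points for the whole family -/
structure Good (N : ℕ) (A B : ℕ → ℝ[X]) (z : ℝ) : Prop where
  hz : z ≠ 0
  hA : ∀ j ≤ N, (A j).eval z ≠ 0
  hB : ∀ j ≤ N, (B j).eval z ≠ 0
  hw : ∀ j < N, wf A B j z - 1 ≠ 0

lemma Good.w0 {N : ℕ} {A B : ℕ → ℝ[X]} {z : ℝ} (h : Good N A B z) (j : ℕ) (hj : j < N) :
    wf A B j z ≠ 0 := by
  unfold wf
  exact div_ne_zero (mul_ne_zero (h.hB _ (by omega)) (h.hA _ (by omega)))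
    (mul_ne_zero (h.hA _ (by omega)) (h.hB _ (by omega)))

lemma hyp_zero (N : ℕ) (hN : 0 < N) (a : ℝ) (A B : ℕ → ℝ[X]) (U : Set ℝ) (hU : IsOpen U)
    (hG : ∀ z ∈ U, Good N A B z) (hA0 : A 0 = 1) (hB0 : B 0 = 1)
    (r1 : X * derivative (A 1) = C (N : ℝ) * A 1 - C ((N : ℝ) + a) * B 1)
    (r2 : derivative (A 1) = derivative (B 1) - B 1) :
    ∀ z ∈ U, Hyp N a A B 0 z := by
  have key : ∀ z ∈ U, pf N a A B 0 z = 0 ∧ xf B 0 z = z + (N : ℝ) * wf A B 0 z - (N + a) := by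
    intro z hzU
    have g := hG z hzU
    have hA1 := g.hA 1 hN
    have hB1 := g.hB 1 hN
    have hw := g.hw 0 hN
    have e1 := congrArg (eval z) r1
    have e2 := congrArg (eval z) r2
    simp only [eval_mul, eval_X, eval_sub, eval_C] at e1 e2
    constructor
    · unfold pf
      rw [div_eq_zero_iff]; left
      simp only [wf, xf, ld, hA0, hB0]
      simp only [derivative_one, eval_one, eval_zero, zero_add, e1]
      push_cast
      field_simp
      ring
    · simp only [wf, xf, ld, hA0, hB0]
      simp only [derivative_one, eval_one, eval_zero, zero_add]
      have e3 : z * eval z (derivative (B 1)) = N * eval z (A 1) - (N + a) * eval z (B 1)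
          + z * eval z (B 1) := by
        rw [← e1, e2]; ring
      rw [e3]
      field_simp
      ring
  intro z hzU
  obtain ⟨k1, k2⟩ := key z hzU
  refine ⟨?_, ?_, ?_, 0, ?_, ?_⟩
  · rw [k1, k2]; push_cast; ring
  · rw [k1, hA0]; simp [l2]
  · rw [k1, hB0]; simp [l2]
  · refine (hasDerivAt_const z (0 : ℝ)).congr_of_eventuallyEq ?_
    filter_upwards [hU.mem_nhds hzU] with y hy
    exact (key y hy).1
  · rw [k1]; simp

lemma hyp_succ (N : ℕ) (a : ℝ) (A B : ℕ → ℝ[X]) (U : Set ℝ) (hU : IsOpen U)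
    (hG : ∀ z ∈ U, Good N A B z) (n : ℕ) (hn : n + 2 ≤ N)
    (tA : A (n + 2) * A n = A (n + 1) * derivative (derivative (A (n + 1)))
      - derivative (A (n + 1)) ^ 2)
    (tB : B (n + 2) * B n = B (n + 1) * derivative (derivative (B (n + 1)))
      - derivative (B (n + 1)) ^ 2)
    (ih : ∀ z ∈ U, Hyp N a A B n z) :
    ∀ z ∈ U, Hyp N a A B (n + 1) z := by
  set m : ℝ := (N : ℝ) - n with hm
  set w := wf A B n with hwdef
  set p := pf N a A B n with hpdef
  set s : ℝ → ℝ := fun z => (p z + (m + 2 * n + a)) / w z - m with hsdef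
  -- derivative data
  have D : ∀ z ∈ U, ∃ w' p', HasDerivAt w w' z ∧ HasDerivAt p p' z ∧
      HasDerivAt s ((p' * w z - (p z + (m + 2 * n + a)) * w') / w z ^ 2) z ∧
      z * w' = w z * (xf A n z - xf B n z) ∧
      z * p' = (w z - 1) * p z * (p z + (m + 2 * n + a)) / w z
        - z * w z * (p z + n) / (w z - 1) := by
    intro z hzU
    have g := hG z hzU
    obtain ⟨-, -, -, p', hp', hp'e⟩ := ih z hzU
    have hw' := wf_hasDerivAt A B n z g.hz (g.hA _ (by omega)) (g.hA _ (by omega))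
      (g.hB _ (by omega)) (g.hB _ (by omega))
    refine ⟨_, p', hw', hp', ?_, ?_, hp'e⟩
    · exact ((hp'.add_const _).div hw' (g.w0 n (by omega))).sub_const _
    · have := g.hz
      rw [← hwdef]; field_simp
  have Xeq : ∀ z ∈ U, xf A n z = p z - (p z + (m + 2 * n + a)) / w z + m := fun z hzU =>
    xf_eq N a A B n z ((hG z hzU).w0 n (by omega)) ((hG z hzU).hw n (by omega))
  have Yeq : ∀ z ∈ U, xf B n z = z + p z / w z - (p z - m * w z + (m + 2 * n + a)) :=
    fun z hzU => (ih z hzU).1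
  have Feq : ∀ z ∈ U,
      -l2 (A (n + 1)) z = s z * (s z - (a + 2 * n + 1)) - z * (s z - (a + n)) / (w z - 1) ∧
      -l2 (B (n + 1)) z = s z * w z * (s z * w z - (a + 2 * n + 1))
        - z * w z * (s z * w z - (a + n)) / (w z - 1) := by
    intro z hzU
    have g := hG z hzU
    have hz := g.hz
    have hw0 : w z ≠ 0 := g.w0 n (by omega)
    have hw1 : w z - 1 ≠ 0 := g.hw n (by omega)
    obtain ⟨w', p', hw', hp', -, ew, ep⟩ := D z hzU
    obtain ⟨-, hb, hd, -⟩ := ih z hzU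
    have hX1 := xf_hasDerivAt A n z hz (g.hA _ (by omega)) (g.hA _ (by omega))
    have hY1 := xf_hasDerivAt B n z hz (g.hB _ (by omega)) (g.hB _ (by omega))
    have hX2 : HasDerivAt (xf A n) (p' - (p' * w z - (p z + (m + 2 * n + a)) * w') / w z ^ 2) z := by
      have h := (hp'.sub ((hp'.add_const (m + 2 * n + a)).div hw' hw0)).add_const m
      refine h.congr_of_eventuallyEq ?_
      filter_upwards [hU.mem_nhds hzU] with y hy
      simpa using Xeq y hy
    have hY2 : HasDerivAt (xf B n) (1 + (p' * w z - p z * w') / w z ^ 2 - (p' - m * w')) z := by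
      have h := ((hasDerivAt_id z).add (hp'.div hw' hw0)).sub
        ((hp'.sub (hw'.const_mul m)).add_const (m + 2 * n + a))
      refine h.congr_of_eventuallyEq ?_
      filter_upwards [hU.mem_nhds hzU] with y hy
      simpa using Yeq y hy
    constructor
    · exact alg_b z (w z) (p z) m n a _ _ _ _ w' p' _ hz hw0 hw1 (Xeq z hzU) (Yeq z hzU) ew ep
        (by field_simp) (hX1.unique hX2) hb (s z) rfl
    · exact alg_d z (w z) (p z) m n a _ _ _ _ w' p' _ hz hw0 hw1 (Xeq z hzU) (Yeq z hzU) ew ep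
        (by field_simp) (hY1.unique hY2) hd (s z) rfl
  -- the algebraic step
  have S : ∀ z ∈ U, s z ≠ 0 ∧ pf N a A B (n + 1) z = -l2 (A (n + 1)) z / s z ∧
    xf B (n + 1) z = z + pf N a A B (n + 1) z / wf A B (n + 1) z
      - (pf N a A B (n + 1) z - (m - 1) * wf A B (n + 1) z + (m + 2 * n + a + 1)) ∧
    -l2 (A (n + 1)) z = pf N a A B (n + 1) z * (pf N a A B (n + 1) z + a + 2 * n + 1)
      - z * wf A B (n + 1) z * (pf N a A B (n + 1) z + n + 1) / (wf A B (n + 1) z - 1) ∧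
    -l2 (B (n + 1)) z = (pf N a A B (n + 1) z / wf A B (n + 1) z) *
        (pf N a A B (n + 1) z / wf A B (n + 1) z + a + 2 * n + 1)
      - z * (pf N a A B (n + 1) z / wf A B (n + 1) z + n + 1) / (wf A B (n + 1) z - 1) ∧
    ∃ b' s', HasDerivAt (fun z => -l2 (A (n + 1)) z) b' z ∧ HasDerivAt s s' z ∧
    z * ((b' * s z - -l2 (A (n + 1)) z * s') / s z ^ 2) =
      (wf A B (n + 1) z - 1) * pf N a A B (n + 1) z *
        (pf N a A B (n + 1) z + (m + 2 * n + a + 1)) / wf A B (n + 1) z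
      - z * wf A B (n + 1) z * (pf N a A B (n + 1) z + n + 1) / (wf A B (n + 1) z - 1) := by
    intro z hzU
    have g := hG z hzU
    have hz := g.hz
    have hw0 : w z ≠ 0 := g.w0 n (by omega)
    have hw1 : w z - 1 ≠ 0 := g.hw n (by omega)
    obtain ⟨w', p', hw', hp', hs', ew, ep⟩ := D z hzU
    set s' := (p' * w z - (p z + (m + 2 * n + a)) * w') / w z ^ 2 with hs'def
    obtain ⟨es, ew2, eX, eY⟩ := alg_s z (w z) (p z) m n a _ _ w' p' (s z) s' hz hw0 hw1
      (Xeq z hzU) (Yeq z hzU) ew ep rfl rfl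
    obtain ⟨hb, hd⟩ := Feq z hzU
    have a0 := g.hA n (by omega)
    have a1 := g.hA (n + 1) (by omega)
    have a2 := g.hA (n + 2) (by omega)
    have b0 := g.hB n (by omega)
    have b1 := g.hB (n + 1) (by omega)
    have b2 := g.hB (n + 2) (by omega)
    have hb1 := (l2_hasDerivAt A n z hz a0 a1 a2 tA).neg
    have hd1 := (l2_hasDerivAt B n z hz b0 b1 b2 tB).neg
    have hc1 := hs'.sub_const (a + 2 * n + 1)
    have hc2 := (hasDerivAt_id z).mul (hs'.sub_const (a + n))
    have hsw := hs'.mul hw'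
    have hb2 : HasDerivAt (fun z => -l2 (A (n + 1)) z)
        (s' * (s z - (a + 2 * n + 1)) + s z * s' -
      (((s z - (a + n)) + z * s') * (w z - 1) - z * (s z - (a + n)) * w') / (w z - 1) ^ 2) z := by
      have h := (hs'.mul hc1).sub (hc2.div (hw'.sub_const 1) hw1)
      refine (h.congr_of_eventuallyEq ?_).congr_deriv ?_
      · filter_upwards [hU.mem_nhds hzU] with y hy
        simpa using (Feq y hy).1
      · simp only [id, Pi.mul_apply]; ring
    have hd2 : HasDerivAt (fun z => -l2 (B (n + 1)) z)
        ((s' * w z + s z * w') * (s z * w z - (a + 2 * n + 1)) + s z * w z * (s' * w z + s z * w') -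
      (((w z + z * w') * (s z * w z - (a + n)) + z * w z * (s' * w z + s z * w')) * (w z - 1)
        - z * w z * (s z * w z - (a + n)) * w') / (w z - 1) ^ 2) z := by
      have h := (hsw.mul (hsw.sub_const (a + 2 * n + 1))).sub
        ((((hasDerivAt_id z).mul hw').mul (hsw.sub_const (a + n))).div (hw'.sub_const 1) hw1)
      refine (h.congr_of_eventuallyEq ?_).congr_deriv ?_
      · filter_upwards [hU.mem_nhds hzU] with y hy
        simpa using (Feq y hy).2
      · simp only [id, Pi.mul_apply]; ring
    have tAz := l2_toda A n z tA
    have tBz := l2_toda B n z tB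
    have hbne : -l2 (A (n + 1)) z ≠ 0 := by
      rw [tAz]; apply neg_ne_zero.mpr; positivity
    have hdne : -l2 (B (n + 1)) z ≠ 0 := by
      rw [tBz]; apply neg_ne_zero.mpr; positivity
    have main := alg_step z (w z) m n a (s z) (xf A n z) (xf B n z) w' s'
      (-l2 (A (n + 1)) z) (-l2 (B (n + 1)) z) _ _ (xf A (n + 1) z) (xf B (n + 1) z)
      (wf A B (n + 1) z) (pf N a A B (n + 1) z) hz hw0 hw1 hbne hdne (g.hw (n + 1) (by omega))
      eX eY ew2 es hb hd rfl rfl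
      (by rw [← hb1.unique hb2]; field_simp)
      (by rw [← hd1.unique hd2]; field_simp)
      (by
        rw [tAz, tBz, hwdef]
        simp only [wf]
        field_simp)
      (by
        simp only [pf, hm]
        push_cast
        congr 1; ring)
    obtain ⟨h1, h2, h3, h4, h5, h6⟩ := main
    exact ⟨h1, h2, h3, h4, h5, _, s', hb2, hs', h6⟩
  intro z hzU
  obtain ⟨h1, h2, h3, h4, h5, b', s', hb', hs', h6⟩ := S z hzU
  refine ⟨?_, ?_, ?_, (b' * s z - -l2 (A (n + 1)) z * s') / s z ^ 2, ?_, ?_⟩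
  · rw [h3, hm]; push_cast; ring
  · rw [h4]; push_cast; ring
  · rw [h5]; push_cast; ring
  · refine (hb'.div hs' h1).congr_of_eventuallyEq ?_
    filter_upwards [hU.mem_nhds hzU] with y hy
    exact (S y hy).2.1
  · rw [h6, hm]; push_cast; ring

/-- clearing denominators in the fifth Painleve equation for a quotient `P / Q` -/
lemma pv_clear (z P Q P1 Q1 P2 Q2 α β γ : ℝ) (hz : z ≠ 0) (hP : P ≠ 0) (hQ : Q ≠ 0)
    (hPQ : P - Q ≠ 0) :
    ((P2 * Q - P * Q2) * Q - 2 * (P1 * Q - P * Q1) * Q1) / Q ^ 3 -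
      ((1 / (2 * (P / Q)) + 1 / (P / Q - 1)) * ((P1 * Q - P * Q1) / Q ^ 2) ^ 2
      - (1 / z) * ((P1 * Q - P * Q1) / Q ^ 2)
      + (P / Q - 1) ^ 2 * (α * (P / Q) ^ 2 + β) / (z ^ 2 * (P / Q))
      + γ * (P / Q) / z
      - (P / Q) * (P / Q + 1) / (2 * (P / Q - 1))) =
    (2 * z ^ 2 * P * (P - Q) * ((P2 * Q - P * Q2) * Q - 2 * (P1 * Q - P * Q1) * Q1)
      - (z ^ 2 * (3 * P - Q) * (P1 * Q - P * Q1) ^ 2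
        - 2 * z * P * (P - Q) * (P1 * Q - P * Q1) * Q
        + 2 * (P - Q) ^ 3 * (α * P ^ 2 + β * Q ^ 2)
        + 2 * γ * z * P ^ 2 * (P - Q) * Q ^ 2 - z ^ 2 * P ^ 2 * (P + Q) * Q ^ 2)) /
      (2 * z ^ 2 * P * (P - Q) * Q ^ 3) := by
  have h : P / Q - 1 = (P - Q) / Q := by field_simp
  rw [h]
  obtain ⟨d, rfl⟩ : ∃ d, P = Q + d := ⟨P - Q, by ring⟩
  rw [add_sub_cancel_left] at *
  field_simp
  ring

/-- the cleared fifth Painleve equation as a polynomial -/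
def pvPoly (α β γ : ℝ) (P Q : ℝ[X]) : ℝ[X] :=
  2 * X ^ 2 * P * (P - Q) * ((derivative (derivative P) * Q - P * derivative (derivative Q)) * Q
      - 2 * (derivative P * Q - P * derivative Q) * derivative Q)
      - (X ^ 2 * (3 * P - Q) * (derivative P * Q - P * derivative Q) ^ 2
        - 2 * X * P * (P - Q) * (derivative P * Q - P * derivative Q) * Q
        + 2 * (P - Q) ^ 3 * (C α * P ^ 2 + C β * Q ^ 2)
        + 2 * C γ * X * P ^ 2 * (P - Q) * Q ^ 2 - X ^ 2 * P ^ 2 * (P + Q) * Q ^ 2)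

lemma quot_hasDerivAt (P Q : ℝ[X]) (z : ℝ) (hQ : Q.eval z ≠ 0) :
    HasDerivAt (fun z => P.eval z / Q.eval z)
      (((derivative P).eval z * Q.eval z - P.eval z * (derivative Q).eval z) / Q.eval z ^ 2) z :=
  (P.hasDerivAt z).div (Q.hasDerivAt z) hQ

lemma quot_hasDerivAt2 (P Q : ℝ[X]) (z : ℝ) (hQ : Q.eval z ≠ 0) :
    HasDerivAt (deriv (fun z => P.eval z / Q.eval z))
      ((((derivative (derivative P)).eval z * Q.eval z -
          P.eval z * (derivative (derivative Q)).eval z) * Q.eval z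
        - 2 * ((derivative P).eval z * Q.eval z - P.eval z * (derivative Q).eval z) *
          (derivative Q).eval z) / Q.eval z ^ 3) z := by
  have h := (quot_hasDerivAt (derivative P * Q - P * derivative Q) (Q ^ 2) z (by simpa using hQ))
  have e : deriv (fun z => P.eval z / Q.eval z) =ᶠ[nhds z]
      fun z => (derivative P * Q - P * derivative Q).eval z / (Q ^ 2).eval z := by
    have : ∀ᶠ y in nhds z, Q.eval y ≠ 0 := Q.continuous.continuousAt.eventually_ne hQ
    filter_upwards [this] with y hy
    rw [(quot_hasDerivAt P Q y hy).deriv]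
    simp
  refine (h.congr_of_eventuallyEq e).congr_deriv ?_
  simp only [derivative_mul, derivative_sub, derivative_pow, eval_mul, eval_sub, eval_add, eval_pow,
    eval_C, eval_natCast]
  push_cast
  field_simp
  ring

lemma quot_pv_iff (α β γ : ℝ) (P Q : ℝ[X]) (z : ℝ) (hz : z ≠ 0) (hQ : Q.eval z ≠ 0)
    (hw : P.eval z / Q.eval z ≠ 0) (hw1 : P.eval z / Q.eval z ≠ 1) :
    PV α β γ (fun z => P.eval z / Q.eval z) z ↔ (pvPoly α β γ P Q).eval z = 0 := by
  have hP : P.eval z ≠ 0 := fun h => hw (by simp [h])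
  have hPQ : P.eval z - Q.eval z ≠ 0 := fun h => hw1 (by
    rw [sub_eq_zero.mp h]; exact div_self hQ)
  have hc := pv_clear z (P.eval z) (Q.eval z) ((derivative P).eval z) ((derivative Q).eval z)
    ((derivative (derivative P)).eval z) ((derivative (derivative Q)).eval z) α β γ hz hP hQ hPQ
  unfold PV
  rw [iteratedDeriv_succ, iteratedDeriv_one, (quot_hasDerivAt2 P Q z hQ).deriv,
    (quot_hasDerivAt P Q z hQ).deriv, ← sub_eq_zero, hc]
  have hd : 2 * z ^ 2 * eval z P * (eval z P - eval z Q) * eval z Q ^ 3 ≠ 0 := by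
    positivity
  rw [div_eq_zero_iff, or_iff_left hd]
  simp [pvPoly]

lemma tau_zero (f : ℝ[X]) : tau f 0 = 1 := by simp [tau]

lemma tau_one (f : ℝ[X]) : tau f 1 = f := by simp [tau]

/-- degrees of all the determinants needed -/
lemma tau_lag_deg (N : ℕ) (a : ℝ) (j : ℕ) (hj : j ≤ N + 1) :
    tau (lagP N a) j ≠ 0 ∧ (tau (lagP N a) j).natDegree = j * (N + 1 - j) :=
  (tau_deg (lagP N a) N (lagP_natDegree N a) (lagP_ne_zero N a) j).1 hj

lemma diff_ne (M : ℕ) (a : ℝ) (j : ℕ) (hj : j ≤ M) :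
    tau (lagP M a) j * tau (lagP (M + 1) a) (j + 1) -
      tau (lagP (M + 1) a) j * tau (lagP M a) (j + 1) ≠ 0 := by
  obtain ⟨h1, d1⟩ := tau_lag_deg M a j (by omega)
  obtain ⟨h2, d2⟩ := tau_lag_deg (M + 1) a (j + 1) (by omega)
  obtain ⟨h3, d3⟩ := tau_lag_deg (M + 1) a j (by omega)
  obtain ⟨h4, d4⟩ := tau_lag_deg M a (j + 1) (by omega)
  intro h
  have := congrArg natDegree (sub_eq_zero.mp h)
  rw [natDegree_mul h1 h2, natDegree_mul h3 h4, d1, d2, d3, d4] at this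
  obtain ⟨i, rfl⟩ : ∃ i, M = j + i := ⟨M - j, by omega⟩
  have e1 : j + i + 1 - j = i + 1 := by omega
  have e2 : j + i + 1 + 1 - (j + 1) = i + 1 := by omega
  have e3 : j + i + 1 + 1 - j = i + 2 := by omega
  have e4 : j + i + 1 - (j + 1) = i := by omega
  rw [e1, e2, e3, e4] at this
  nlinarith

/-- the bad polynomial -/
def badF (M : ℕ) (a : ℝ) : ℝ[X] :=
  X * (∏ j ∈ Finset.range (M + 2), (tau (lagP (M + 1) a) j * tau (lagP M a) j)) *
    ∏ j ∈ Finset.range (M + 1), (tau (lagP M a) j * tau (lagP (M + 1) a) (j + 1) -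
      tau (lagP (M + 1) a) j * tau (lagP M a) (j + 1))

lemma badF_ne (M : ℕ) (a : ℝ) : badF M a ≠ 0 := by
  refine mul_ne_zero (mul_ne_zero X_ne_zero ?_) ?_
  · refine Finset.prod_ne_zero_iff.mpr fun j hj => ?_
    have := Finset.mem_range.mp hj
    exact mul_ne_zero (tau_lag_deg _ a j (by omega)).1 (tau_lag_deg _ a j (by omega)).1
  · refine Finset.prod_ne_zero_iff.mpr fun j hj => ?_
    have := Finset.mem_range.mp hj
    exact diff_ne M a j (by omega)

lemma badF_good (M : ℕ) (a z : ℝ) (h : (badF M a).eval z ≠ 0) :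
    Good (M + 1) (tau (lagP (M + 1) a)) (tau (lagP M a)) z := by
  simp only [badF, eval_mul, eval_X, eval_prod, mul_ne_zero_iff, Finset.prod_ne_zero_iff,
    Finset.mem_range] at h
  obtain ⟨⟨hz, h1⟩, h2⟩ := h
  refine ⟨hz, fun j hj => (h1 j (by omega)).1, fun j hj => (h1 j (by omega)).2, fun j hj h0 => ?_⟩
  apply h2 j hj
  have ha := (h1 j (by omega)).1
  have hb := (h1 (j + 1) (by omega)).2
  rw [wf, sub_eq_zero, div_eq_one_iff_eq (mul_ne_zero ha hb)] at h0
  simp only [eval_sub, eval_mul, h0, sub_self]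

lemma hyp_all (M : ℕ) (a : ℝ) (n : ℕ) (hn : n ≤ M) : ∀ z, (badF M a).eval z ≠ 0 →
    Hyp (M + 1) a (tau (lagP (M + 1) a)) (tau (lagP M a)) n z := by
  have hU : IsOpen {z : ℝ | (badF M a).eval z ≠ 0} :=
    isOpen_ne_fun (badF M a).continuous continuous_const
  have hG : ∀ z ∈ {z : ℝ | (badF M a).eval z ≠ 0},
      Good (M + 1) (tau (lagP (M + 1) a)) (tau (lagP M a)) z := fun z hz => badF_good M a z hz
  suffices H : ∀ z ∈ {z : ℝ | (badF M a).eval z ≠ 0},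
    Hyp (M + 1) a (tau (lagP (M + 1) a)) (tau (lagP M a)) n z from H
  induction n with
  | zero =>
    refine hyp_zero (M + 1) (by omega) a _ _ _ hU hG (tau_zero _) (tau_zero _) ?_ ?_
    · rw [tau_one, tau_one, lagP_rel1]; push_cast; rfl
    · rw [tau_one, tau_one, lagP_rel2]
  | succ n ih =>
    exact hyp_succ (M + 1) a _ _ _ hU hG n (by omega)
      (toda _ n (tau_lag_deg _ a n (by omega)).1)
      (toda _ n (tau_lag_deg _ a n (by omega)).1) (ih (by omega))

lemma pv_on_good (M : ℕ) (a : ℝ) (n : ℕ) (hn : n ≤ M) (z : ℝ) (hzU : (badF M a).eval z ≠ 0) :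
    PV (((M : ℝ) + 1 - n) ^ 2 / 2) (-((M : ℝ) + 1 - n + 2 * n + (a - 1) + 1) ^ 2 / 2) (a - 1)
      (wf (tau (lagP (M + 1) a)) (tau (lagP M a)) n) z := by
  set A := tau (lagP (M + 1) a) with hA
  set B := tau (lagP M a) with hB
  have hU : IsOpen {z : ℝ | (badF M a).eval z ≠ 0} :=
    isOpen_ne_fun (badF M a).continuous continuous_const
  have first : ∀ y, (badF M a).eval y ≠ 0 → ∃ w', HasDerivAt (wf A B n) w' y ∧
      y * w' = (wf A B n y - 1) * (2 * pf (M + 1) a A B n y - ((M : ℝ) + 1 - n) * wf A B n y +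
        ((M : ℝ) + 1 - n + 2 * n + a)) - y * wf A B n y := by
    intro y hy
    have g := badF_good M a y hy
    have hw0 := g.w0 n (by omega)
    have hw1 := g.hw n (by omega)
    have hy0 := g.hz
    refine ⟨_, wf_hasDerivAt A B n y g.hz (g.hA _ (by omega)) (g.hA _ (by omega))
      (g.hB _ (by omega)) (g.hB _ (by omega)), ?_⟩
    rw [xf_eq (M + 1) a A B n y hw0 hw1, (hyp_all M a n hn y hy).1]
    push_cast
    rw [← hA, ← hB] at *
    field_simp
    ring
  have g := badF_good M a z hzU
  have hw0 := g.w0 n (by omega)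
  have hw1 := g.hw n (by omega)
  obtain ⟨w', hw', ew⟩ := first z hzU
  obtain ⟨-, -, -, p', hp', ep⟩ := hyp_all M a n hn z hzU
  rw [← hA, ← hB] at hp' ep
  have hwq : wf A B n = fun z => (B n * A (n + 1)).eval z / (A n * B (n + 1)).eval z := by
    funext y; simp [wf]
  have h2 := quot_hasDerivAt2 (B n * A (n + 1)) (A n * B (n + 1)) z (by
    rw [eval_mul]
    exact mul_ne_zero (g.hA _ (by omega)) (g.hB _ (by omega)))
  rw [← hwq] at h2
  have hL := (hasDerivAt_id z).mul h2
  have hR : HasDerivAt (id * deriv (wf A B n)) (w' * (2 * pf (M + 1) a A B n z -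
      ((M : ℝ) + 1 - n) * wf A B n z + ((M : ℝ) + 1 - n + 2 * n + a)) +
      (wf A B n z - 1) * (2 * p' - ((M : ℝ) + 1 - n) * w') - (wf A B n z + z * w')) z := by
    have h := ((hw'.sub_const 1).mul (((hp'.const_mul 2).sub
      (hw'.const_mul ((M : ℝ) + 1 - n))).add_const ((M : ℝ) + 1 - n + 2 * n + a))).sub
      ((hasDerivAt_id z).mul hw')
    refine (h.congr_of_eventuallyEq ?_).congr_deriv ?_
    · filter_upwards [hU.mem_nhds hzU] with y hy
      obtain ⟨v, hv, ev⟩ := first y hy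
      simp only [Pi.mul_apply, Pi.sub_apply, id]
      rw [hv.deriv, ev]
    · simp only [id, Pi.sub_apply, Pi.mul_apply, Pi.add_apply, one_mul]
  have hu := hL.unique hR
  unfold PV
  rw [iteratedDeriv_succ, iteratedDeriv_one, h2.deriv, hw'.deriv]
  refine alg_pv z (wf A B n z) (pf (M + 1) a A B n z) ((M : ℝ) + 1 - n) n a w' _ p' g.hz hw0 hw1
    ew ?_ ?_
  · rw [ep]; push_cast; ring
  · simp only [id, one_mul] at hu
    rw [hw'.deriv] at hu
    rw [hu]; ring

lemma wf_pv (m n : ℕ) (hm : 1 ≤ m) (μ : ℝ) (w : ℝ → ℝ)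
    (hw : w = fun z =>
      genLag ((m : ℤ) - 1) n μ z * genLag ((m : ℤ) - 1) (n + 1) μ z /
        (genLag (m : ℤ) n μ z * genLag ((m : ℤ) - 2) (n + 1) μ z)) (z : ℝ) (hz : z ≠ 0)
    (hd : genLag (m : ℤ) n μ z * genLag ((m : ℤ) - 2) (n + 1) μ z ≠ 0)
    (h0 : w z ≠ 0) (h1 : w z ≠ 1) :
    PV ((m : ℝ) ^ 2 / 2) (-((m : ℝ) + 2 * n + μ + 1) ^ 2 / 2) μ w z := by
  obtain ⟨i, rfl⟩ : ∃ i, m = i + 1 := ⟨m - 1, by omega⟩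
  set M := i + n with hM
  have e1 : ∀ y, genLag (((i + 1 : ℕ) : ℤ) - 1) n μ y = (tau (lagP M (μ + 1)) n).eval y :=
    fun y => genLag_eq _ n M μ (by omega) y
  have e2 : ∀ y, genLag (((i + 1 : ℕ) : ℤ) - 1) (n + 1) μ y =
    (tau (lagP (M + 1) (μ + 1)) (n + 1)).eval y := fun y => genLag_eq _ _ _ μ (by omega) y
  have e3 : ∀ y, genLag ((i + 1 : ℕ) : ℤ) n μ y =
    (tau (lagP (M + 1) (μ + 1)) n).eval y := fun y => genLag_eq _ _ _ μ (by omega) y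
  have e4 : ∀ y, genLag (((i + 1 : ℕ) : ℤ) - 2) (n + 1) μ y =
    (tau (lagP M (μ + 1)) (n + 1)).eval y := fun y => genLag_eq _ _ _ μ (by omega) y
  simp only [e1, e2, e3, e4] at hw hd
  set a := μ + 1 with ha
  set P := tau (lagP M a) n * tau (lagP (M + 1) a) (n + 1) with hP
  set Q := tau (lagP (M + 1) a) n * tau (lagP M a) (n + 1) with hQ
  have hwq : w = fun z => P.eval z / Q.eval z := by
    rw [hw]; funext y; simp [hP, hQ]
  have hwf : w = wf (tau (lagP (M + 1) a)) (tau (lagP M a)) n := by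
    rw [hw]; rfl
  have hc1 : ((i + 1 : ℕ) : ℝ) = (M : ℝ) + 1 - n := by rw [hM]; push_cast; ring
  have key : pvPoly (((M : ℝ) + 1 - n) ^ 2 / 2)
      (-((M : ℝ) + 1 - n + 2 * n + (a - 1) + 1) ^ 2 / 2) (a - 1) P Q = 0 := by
    have : pvPoly (((M : ℝ) + 1 - n) ^ 2 / 2)
      (-((M : ℝ) + 1 - n + 2 * n + (a - 1) + 1) ^ 2 / 2) (a - 1) P Q * badF M a = 0 := by
      apply Polynomial.funext
      intro y
      rw [eval_mul, eval_zero]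
      by_cases hy : (badF M a).eval y = 0
      · rw [hy, mul_zero]
      · have g := badF_good M a y hy
        have hpv := pv_on_good M a n (by omega) y hy
        have hw0 := g.w0 n (by omega)
        have hw1 := g.hw n (by omega)
        rw [← hwf, hwq] at hpv hw0 hw1
        rw [(quot_pv_iff _ _ _ P Q y g.hz ?_ hw0 (sub_ne_zero.mp hw1)).mp hpv, zero_mul]
        rw [hQ, eval_mul]
        exact mul_ne_zero (g.hA _ (by omega)) (g.hB _ (by omega))
    exact (mul_eq_zero.mp this).resolve_right (badF_ne M a)
  have hγ : μ = a - 1 := by rw [ha]; ring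
  rw [hc1]
  have hγ2 : (M : ℝ) + 1 - n + 2 * n + μ + 1 = (M : ℝ) + 1 - n + 2 * n + (a - 1) + 1 := by
    rw [← hγ]
  rw [hγ2]
  conv => arg 3; rw [hγ]
  rw [hwq] at h0 h1 ⊢
  rw [quot_pv_iff _ _ _ P Q z hz (by rw [hQ, eval_mul]; exact hd) h0 h1, key, eval_zero]

lemma PV_neg (α β γ : ℝ) (w : ℝ → ℝ) (z : ℝ) (h : PV α β γ w (-z)) :
    PV α β (-γ) (fun z => w (-z)) z := by
  unfold PV at *
  rw [iteratedDeriv_comp_neg, deriv_comp_neg, h]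
  simp only [smul_eq_mul]
  rw [one_div_neg_eq_neg_one_div, neg_sq, neg_sq, div_neg]
  ring

/-- non-uniqueness of rational solutions of `P_V` for integer `μ = k ≥ -n`. -/
theorem pv_nonuniqueness (m n : ℕ) (hm : 1 ≤ m) (hn : 1 ≤ n) (k : ℤ) (hk : -(n : ℤ) ≤ k)
    (w wh : ℝ → ℝ)
    (hw : w = fun z =>
      genLag ((m : ℤ) - 1) n (k : ℝ) z * genLag ((m : ℤ) - 1) (n + 1) (k : ℝ) z /
        (genLag (m : ℤ) n (k : ℝ) z * genLag ((m : ℤ) - 2) (n + 1) (k : ℝ) z))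
    (hwh : wh = fun z =>
      genLag ((m : ℤ) - 1) ((n : ℤ) + k).toNat (-(k : ℝ)) (-z) *
          genLag ((m : ℤ) - 1) (((n : ℤ) + k).toNat + 1) (-(k : ℝ)) (-z) /
        (genLag (m : ℤ) ((n : ℤ) + k).toNat (-(k : ℝ)) (-z) *
          genLag ((m : ℤ) - 2) (((n : ℤ) + k).toNat + 1) (-(k : ℝ)) (-z))) :
    (∀ z : ℝ, z ≠ 0 →
        genLag (m : ℤ) n (k : ℝ) z * genLag ((m : ℤ) - 2) (n + 1) (k : ℝ) z ≠ 0 →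
        w z ≠ 0 → w z ≠ 1 →
        PV ((m : ℝ) ^ 2 / 2) (-((m : ℝ) + 2 * n + k + 1) ^ 2 / 2) (k : ℝ) w z)
      ∧ ∀ z : ℝ, z ≠ 0 →
        genLag (m : ℤ) ((n : ℤ) + k).toNat (-(k : ℝ)) (-z) *
            genLag ((m : ℤ) - 2) (((n : ℤ) + k).toNat + 1) (-(k : ℝ)) (-z) ≠ 0 →
        wh z ≠ 0 → wh z ≠ 1 →
        PV ((m : ℝ) ^ 2 / 2) (-((m : ℝ) + 2 * n + k + 1) ^ 2 / 2) (k : ℝ) wh z := by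
  refine ⟨fun z hz hd h0 h1 => wf_pv m n hm k w hw z hz hd h0 h1, fun z hz hd h0 h1 => ?_⟩
  have hc : ((((n : ℤ) + k).toNat : ℕ) : ℝ) = (n : ℝ) + k := by
    have h : ((((n : ℤ) + k).toNat : ℕ) : ℤ) = (n : ℤ) + k := Int.toNat_of_nonneg (by omega)
    exact_mod_cast h
  subst hwh
  have h := wf_pv m ((n : ℤ) + k).toNat hm (-(k : ℝ)) _ rfl (-z) (neg_ne_zero.mpr hz) hd h0 h1
  have h2 := PV_neg _ _ _ _ _ h
  rw [neg_neg, hc] at h2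
  have e : (m : ℝ) + 2 * ((n : ℝ) + k) + -(k : ℝ) + 1 = (m : ℝ) + 2 * n + k + 1 := by ring
  rw [e] at h2
  exact h2
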